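/- (Davydov's covariance inequality) Let $\{\xi_t\}$ be a stationary process with $\alpha$-mixing coefficients $\alpha(k)$. Fix an integer $k \ge 1$, and let $\xi$ be measurable with respect to $\sigma(\ldots, \xi_{-1}, \xi_0)$ and $\eta$ measurable with respect to $\sigma(\xi_k, \xi_{k+1}, \ldots)$ with $\mathbb{E}|\xi|^q < \infty$, $\mathbb{E}|\eta|^r < \infty$ for $q, r > 1$ with $1/q + 1/r < 1$. Then $|\mathbb{E}[\xi\eta] - \mathbb{E}[\xi]\mathbb{E}[\eta]| \le 12 (\mathbb{E}|\xi|^q)^{1/q}(\mathbb{E}|\eta|^r)^{1/r} \alpha(k)^{1 - 1/q - 1/r}$. -/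

import Mathlib

open MeasureTheory ProbabilityTheory Filter

/-- Replace a bounded factor by a sign. -/
lemma sign_step {Ω : Type*} {m : MeasurableSpace Ω} {mΩ : MeasurableSpace Ω} (hm : m ≤ mΩ)
    (μ : Measure Ω) [IsProbabilityMeasure μ] (f g : Ω → ℝ) (hf : Measurable[m] f)
    (hg : Integrable g μ) (M : ℝ) (hM : ∀ ω, |f ω| ≤ M) :
    ∃ A : Set Ω, MeasurableSet[m] A ∧
      |(∫ ω, f ω * g ω ∂μ) - (∫ ω, f ω ∂μ) * ∫ ω, g ω ∂μ| ≤
        M * |(∫ ω, (2 * A.indicator 1 ω - 1) * g ω ∂μ)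
          - (∫ ω, (2 * A.indicator 1 ω - 1) ∂μ) * ∫ ω, g ω ∂μ| := by
  set c := ∫ ω, g ω ∂μ with hc
  set h : Ω → ℝ := fun ω => (μ[g|m]) ω - c with hh
  have hhm : Measurable[m] h :=
    (stronglyMeasurable_condExp.measurable).sub_const c
  have hhi : Integrable h μ := integrable_condExp.sub (integrable_const c)
  have key : ∀ (u : Ω → ℝ) (K : ℝ), Measurable[m] u → (∀ ω, |u ω| ≤ K) →
      Integrable (fun ω => u ω * h ω) μ ∧
      (∫ ω, u ω * g ω ∂μ) - (∫ ω, u ω ∂μ) * c = ∫ ω, u ω * h ω ∂μ := by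
    intro u K hu hK
    have hu' : AEStronglyMeasurable u μ := (hu.mono hm le_rfl).aestronglyMeasurable
    have hui : Integrable u μ := Integrable.of_bound hu' K (by
      filter_upwards with ω; simpa using hK ω)
    have i1 : Integrable (fun ω => u ω * g ω) μ := hg.bdd_mul hu' (c := K) (by
      filter_upwards with ω; simpa using hK ω)
    have i2 : Integrable (fun ω => u ω * (μ[g|m]) ω) μ :=
      integrable_condExp.bdd_mul hu' (c := K) (by
        filter_upwards with ω; simpa using hK ω)
    have e1 : ∫ ω, u ω * g ω ∂μ = ∫ ω, u ω * (μ[g|m]) ω ∂μ := by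
      have := condExp_mul_of_stronglyMeasurable_left (μ := μ) (m := m)
        hu.stronglyMeasurable i1 hg
      rw [← integral_condExp hm]
      exact integral_congr_ae this
    have i3 : Integrable (fun ω => u ω * (μ[g|m]) ω - u ω * c) μ := i2.sub (hui.mul_const c)
    refine ⟨by simpa only [hh, mul_sub] using i3, ?_⟩
    simp only [hh, mul_sub]
    rw [integral_sub i2 (hui.mul_const c), e1, integral_mul_const]
  refine ⟨{ω | 0 ≤ h ω}, hhm measurableSet_Ici, ?_⟩
  set A := {ω | 0 ≤ h ω} with hA
  have hAm : MeasurableSet[m] A := hhm measurableSet_Ici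
  have hum : Measurable[m] (fun ω => 2 * A.indicator (1 : Ω → ℝ) ω - 1) :=
    (((@measurable_one ℝ Ω _ m _).indicator hAm).const_mul 2).sub_const 1
  have hub : ∀ ω, |2 * A.indicator (1 : Ω → ℝ) ω - 1| ≤ 1 := by
    intro ω
    by_cases h1 : ω ∈ A <;> simp [h1] <;> norm_num
  obtain ⟨i1, e1⟩ := key f M hf hM
  obtain ⟨i2, e2⟩ := key _ 1 hum hub
  rw [e1, e2]
  have hab : ∀ ω, (2 * A.indicator (1 : Ω → ℝ) ω - 1) * h ω = |h ω| := by
    intro ω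
    by_cases h1 : ω ∈ A
    · have : 0 ≤ h ω := h1
      simp [h1, abs_of_nonneg this]; ring
    · have : h ω < 0 := not_le.mp h1
      simp [h1, abs_of_neg this]
  simp only [hab]
  calc |∫ ω, f ω * h ω ∂μ| ≤ ∫ ω, |f ω * h ω| ∂μ := abs_integral_le_integral_abs
    _ ≤ ∫ ω, M * |h ω| ∂μ := by
        refine integral_mono i1.abs (hhi.abs.const_mul M) fun ω => ?_
        simp only [abs_mul]
        exact mul_le_mul_of_nonneg_right (hM ω) (abs_nonneg _)
    _ = M * ∫ ω, |h ω| ∂μ := integral_const_mul _ _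
    _ ≤ M * |∫ ω, |h ω| ∂μ| := by
        rw [abs_of_nonneg (integral_nonneg fun ω => abs_nonneg _)]

/-- Covariance inequality for bounded variables. -/
lemma bounded_cov {Ω : Type*} {m₁ m₂ : MeasurableSpace Ω} {mΩ : MeasurableSpace Ω}
    (hm₁ : m₁ ≤ mΩ) (hm₂ : m₂ ≤ mΩ)
    (μ : Measure Ω) [IsProbabilityMeasure μ] (a : ℝ)
    (hα : ∀ A B : Set Ω, MeasurableSet[m₁] A → MeasurableSet[m₂] B →
      |(μ (A ∩ B)).toReal - (μ A).toReal * (μ B).toReal| ≤ a)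
    (f g : Ω → ℝ) (hf : Measurable[m₁] f) (hg : Measurable[m₂] g) (M N : ℝ)
    (hM0 : 0 ≤ M) (hN0 : 0 ≤ N)
    (hM : ∀ ω, |f ω| ≤ M) (hN : ∀ ω, |g ω| ≤ N) :
    |(∫ ω, f ω * g ω ∂μ) - (∫ ω, f ω ∂μ) * ∫ ω, g ω ∂μ| ≤ 4 * a * M * N := by
  have hgi : Integrable g μ := Integrable.of_bound
    (hg.mono hm₂ le_rfl).aestronglyMeasurable N (by filter_upwards with ω; simpa using hN ω)
  obtain ⟨A, hA, h1⟩ := sign_step hm₁ μ f g hf hgi M hM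
  have hA' := hm₁ _ hA
  have iA : Integrable (A.indicator (1 : Ω → ℝ)) μ := (integrable_const (1:ℝ)).indicator hA'
  have iu : Integrable (fun ω => 2 * A.indicator (1 : Ω → ℝ) ω - 1) μ :=
    (iA.const_mul 2).sub (integrable_const 1)
  obtain ⟨B, hB, h2⟩ := sign_step hm₂ μ g _ hg iu N hN
  have hB' := hm₂ _ hB
  have iB : Integrable (B.indicator (1 : Ω → ℝ)) μ := (integrable_const (1:ℝ)).indicator hB'
  have iAB : Integrable ((A ∩ B).indicator (1 : Ω → ℝ)) μ :=
    (integrable_const (1:ℝ)).indicator (hA'.inter hB')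
  have eA : ∫ ω, (2 * A.indicator (1 : Ω → ℝ) ω - 1) ∂μ = 2 * (μ A).toReal - 1 := by
    rw [integral_sub (iA.const_mul 2) (integrable_const 1), integral_const_mul,
      integral_indicator_one hA']
    simp [Measure.real]
  have eB : ∫ ω, (2 * B.indicator (1 : Ω → ℝ) ω - 1) ∂μ = 2 * (μ B).toReal - 1 := by
    rw [integral_sub (iB.const_mul 2) (integrable_const 1), integral_const_mul,
      integral_indicator_one hB']
    simp [Measure.real]
  have eAB : ∫ ω, (2 * B.indicator (1 : Ω → ℝ) ω - 1) * (2 * A.indicator (1 : Ω → ℝ) ω - 1) ∂μ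
      = 4 * (μ (A ∩ B)).toReal - 2 * (μ A).toReal - 2 * (μ B).toReal + 1 := by
    have : ∀ ω, (2 * B.indicator (1 : Ω → ℝ) ω - 1) * (2 * A.indicator (1 : Ω → ℝ) ω - 1)
        = 4 * (A ∩ B).indicator (1 : Ω → ℝ) ω - 2 * A.indicator (1 : Ω → ℝ) ω
          - 2 * B.indicator (1 : Ω → ℝ) ω + 1 := by
      intro ω
      by_cases h1 : ω ∈ A <;> by_cases h2 : ω ∈ B <;> simp [h1, h2] <;> norm_num
    simp only [this]
    have t1 : Integrable (fun ω => 4 * (A ∩ B).indicator (1 : Ω → ℝ) ω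
        - 2 * A.indicator (1 : Ω → ℝ) ω) μ := (iAB.const_mul 4).sub (iA.const_mul 2)
    have t2 : Integrable (fun ω => 4 * (A ∩ B).indicator (1 : Ω → ℝ) ω
        - 2 * A.indicator (1 : Ω → ℝ) ω - 2 * B.indicator (1 : Ω → ℝ) ω) μ :=
      t1.sub (iB.const_mul 2)
    rw [integral_add t2 (integrable_const 1), integral_sub t1 (iB.const_mul 2),
      integral_sub (iAB.const_mul 4) (iA.const_mul 2)]
    simp only [integral_const_mul]
    rw [integral_indicator_one hA', integral_indicator_one hB',
      integral_indicator_one (hA'.inter hB')]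
    simp [Measure.real]
  rw [eA, eB, eAB] at h2
  rw [eA] at h1
  have h3 := hα A B hA hB
  have h4 : |4 * (μ (A ∩ B)).toReal - 2 * (μ A).toReal - 2 * (μ B).toReal + 1
      - (2 * (μ B).toReal - 1) * (2 * (μ A).toReal - 1)| ≤ 4 * a := by
    rw [show 4 * (μ (A ∩ B)).toReal - 2 * (μ A).toReal - 2 * (μ B).toReal + 1
      - (2 * (μ B).toReal - 1) * (2 * (μ A).toReal - 1)
      = 4 * ((μ (A ∩ B)).toReal - (μ A).toReal * (μ B).toReal) by ring, abs_mul]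
    norm_num
    exact h3
  have h5 : |(∫ ω, (2 * A.indicator 1 ω - 1) * g ω ∂μ)
          - (2 * (μ A).toReal - 1) * ∫ ω, g ω ∂μ| ≤ N * (4 * a) := by
    refine le_trans (le_of_eq ?_) (h2.trans (mul_le_mul_of_nonneg_left h4 hN0))
    congr 2
    · exact integral_congr_ae (by filter_upwards with ω; ring)
    · ring
  calc _ ≤ _ := h1
    _ ≤ M * (N * (4 * a)) := mul_le_mul_of_nonneg_left h5 hM0
    _ = _ := by ring

lemma young_one (x s : ℝ) (hs : 1 < s) : |x| ≤ (1 / s) * |x| ^ s + (1 - 1 / s) := by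
  have hs0 : 0 < s := by linarith
  have h1 : 1 / s < 1 := by rw [div_lt_one hs0]; exact hs
  have := Real.geom_mean_le_arith_mean2_weighted (w₁ := 1 / s) (w₂ := 1 - 1 / s)
    (p₁ := |x| ^ s) (p₂ := 1) (by positivity) (by linarith) (by positivity) zero_le_one (by ring)
  rw [← Real.rpow_mul (abs_nonneg x), mul_one_div_cancel hs0.ne', Real.rpow_one,
    Real.one_rpow] at this
  linarith

lemma tail_pt (x y a q r : ℝ) (ha : 0 < a) (hq : 1 < q) (hr : 1 < r) (hqr : 1 / q + 1 / r < 1)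
    (hx : a ^ (-(1 / q)) ≤ |x|) :
    |x| * |y| ≤ a ^ (1 - 1 / q - 1 / r) * ((1 - 1 / r) * |x| ^ q + (1 / r) * |y| ^ r) := by
  have hq0 : 0 < q := by linarith
  have hr0 : 0 < r := by linarith
  have hr1 : 1 / r < 1 := by rw [div_lt_one hr0]; exact hr
  set γ := 1 - 1 / q - 1 / r with hγ
  have hγ0 : 0 < γ := by rw [hγ]; linarith
  have hx0 : 0 < |x| := lt_of_lt_of_le (Real.rpow_pos_of_pos ha _) hx
  have h1 : 1 ≤ a * |x| ^ q := by
    have := Real.rpow_le_rpow (Real.rpow_nonneg ha.le _) hx hq0.le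
    rw [← Real.rpow_mul ha.le, show -(1 / q) * q = -1 by field_simp, Real.rpow_neg_one] at this
    calc (1:ℝ) = a * a⁻¹ := (mul_inv_cancel₀ ha.ne').symm
      _ ≤ _ := mul_le_mul_of_nonneg_left this ha.le
  have h2 : 1 ≤ a ^ γ * (|x| ^ q) ^ γ := by
    rw [← Real.mul_rpow ha.le (by positivity)]
    exact Real.one_le_rpow h1 hγ0.le
  have h3 := Real.geom_mean_le_arith_mean2_weighted (w₁ := 1 - 1 / r) (w₂ := 1 / r)
    (p₁ := |x| ^ q) (p₂ := |y| ^ r) (by linarith) (by positivity) (by positivity) (by positivity)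
    (by ring)
  have h4 : (|y| ^ r) ^ (1 / r) = |y| := by
    rw [← Real.rpow_mul (abs_nonneg y), mul_one_div_cancel hr0.ne', Real.rpow_one]
  have h5 : (|x| ^ q) ^ (1 - 1 / r) = |x| * (|x| ^ q) ^ γ := by
    rw [show 1 - 1 / r = 1 / q + γ by rw [hγ]; ring, Real.rpow_add (by positivity),
      ← Real.rpow_mul (abs_nonneg x), mul_one_div_cancel hq0.ne', Real.rpow_one]
  rw [h4, h5] at h3
  calc |x| * |y| ≤ (|x| * |y|) * (a ^ γ * (|x| ^ q) ^ γ) :=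
        le_mul_of_one_le_right (by positivity) h2
    _ = a ^ γ * (|x| * (|x| ^ q) ^ γ * |y|) := by ring
    _ ≤ _ := mul_le_mul_of_nonneg_left h3 (by positivity)

lemma integrable_of_pow {Ω : Type*} {mΩ : MeasurableSpace Ω}
    (μ : Measure Ω) [IsProbabilityMeasure μ] (f : Ω → ℝ) (hf : Measurable f) (s : ℝ) (hs : 1 < s)
    (hfs : Integrable (fun ω => |f ω| ^ s) μ) : Integrable f μ := by
  refine Integrable.mono' ((hfs.const_mul (1 / s)).add (integrable_const (1 - 1 / s)))
    hf.aestronglyMeasurable ?_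
  filter_upwards with ω
  simpa using young_one (f ω) s hs

lemma tail_cov {Ω : Type*} {mΩ : MeasurableSpace Ω}
    (μ : Measure Ω) [IsProbabilityMeasure μ] (f g : Ω → ℝ) (hf : Measurable f) (hg : Measurable g)
    (a q r : ℝ) (ha : 0 < a) (hq : 1 < q) (hr : 1 < r) (hqr : 1 / q + 1 / r < 1)
    (hfq : Integrable (fun ω => |f ω| ^ q) μ) (hgr : Integrable (fun ω => |g ω| ^ r) μ)
    (hf1 : ∫ ω, |f ω| ^ q ∂μ ≤ 1) (hg1 : ∫ ω, |g ω| ^ r ∂μ ≤ 1)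
    (hft : ∀ ω, f ω = 0 ∨ a ^ (-(1 / q)) ≤ |f ω|) :
    Integrable (fun ω => f ω * g ω) μ ∧
    |(∫ ω, f ω * g ω ∂μ) - (∫ ω, f ω ∂μ) * ∫ ω, g ω ∂μ| ≤ 2 * a ^ (1 - 1 / q - 1 / r) := by
  have hr0 : 0 < r := by linarith
  have hr1 : 1 / r < 1 := by rw [div_lt_one hr0]; exact hr
  have hr2 : 0 < 1 / r := by positivity
  set G := a ^ (1 - 1 / q - 1 / r) with hG
  have hG0 : 0 < G := Real.rpow_pos_of_pos ha _
  have pt : ∀ ω y, |f ω| * |y| ≤ G * ((1 - 1 / r) * |f ω| ^ q + (1 / r) * |y| ^ r) := by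
    intro ω y
    rcases hft ω with h | h
    · rw [h, abs_zero, zero_mul]
      have : 0 ≤ 1 - 1 / r := by linarith
      positivity
    · exact tail_pt _ _ _ _ _ ha hq hr hqr h
  have ib : Integrable (fun ω => G * ((1 - 1 / r) * |f ω| ^ q + (1 / r) * |g ω| ^ r)) μ :=
    ((hfq.const_mul _).add (hgr.const_mul _)).const_mul _
  have ifg : Integrable (fun ω => f ω * g ω) μ := by
    refine Integrable.mono' ib (hf.mul hg).aestronglyMeasurable ?_
    filter_upwards with ω
    simpa [abs_mul] using pt ω (g ω)
  have i_f := integrable_of_pow μ f hf q hq hfq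
  have i_g := integrable_of_pow μ g hg r hr hgr
  refine ⟨ifg, ?_⟩
  have b1 : |∫ ω, f ω * g ω ∂μ| ≤ G := by
    calc _ ≤ ∫ ω, |f ω * g ω| ∂μ := abs_integral_le_integral_abs
      _ ≤ ∫ ω, G * ((1 - 1 / r) * |f ω| ^ q + (1 / r) * |g ω| ^ r) ∂μ :=
        integral_mono ifg.abs ib fun ω => by simpa [abs_mul] using pt ω (g ω)
      _ = G * ((1 - 1 / r) * ∫ ω, |f ω| ^ q ∂μ + (1 / r) * ∫ ω, |g ω| ^ r ∂μ) := by
        rw [integral_const_mul, integral_add (hfq.const_mul _) (hgr.const_mul _),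
          integral_const_mul, integral_const_mul]
      _ ≤ G * 1 := by
        refine mul_le_mul_of_nonneg_left ?_ hG0.le
        nlinarith
      _ = G := mul_one G
  have b2 : |∫ ω, f ω ∂μ| ≤ G := by
    calc _ ≤ ∫ ω, |f ω| ∂μ := abs_integral_le_integral_abs
      _ ≤ ∫ ω, G * ((1 - 1 / r) * |f ω| ^ q + (1 / r)) ∂μ :=
        integral_mono i_f.abs (((hfq.const_mul _).add (integrable_const _)).const_mul _)
          fun ω => by simpa using pt ω 1
      _ = G * ((1 - 1 / r) * ∫ ω, |f ω| ^ q ∂μ + (1 / r)) := by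
        rw [integral_const_mul, integral_add (hfq.const_mul _) (integrable_const _),
          integral_const_mul]
        simp
      _ ≤ G * 1 := by
        refine mul_le_mul_of_nonneg_left ?_ hG0.le
        nlinarith
      _ = G := mul_one G
  have b3 : |∫ ω, g ω ∂μ| ≤ 1 := by
    calc _ ≤ ∫ ω, |g ω| ∂μ := abs_integral_le_integral_abs
      _ ≤ ∫ ω, ((1 / r) * |g ω| ^ r + (1 - 1 / r)) ∂μ :=
        integral_mono i_g.abs ((hgr.const_mul _).add (integrable_const _))
          fun ω => young_one _ _ hr
      _ = (1 / r) * ∫ ω, |g ω| ^ r ∂μ + (1 - 1 / r) := by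
        rw [integral_add (hgr.const_mul _) (integrable_const _), integral_const_mul]
        simp
      _ ≤ 1 := by nlinarith
  calc _ ≤ |∫ ω, f ω * g ω ∂μ| + |(∫ ω, f ω ∂μ) * ∫ ω, g ω ∂μ| := abs_sub _ _
    _ ≤ G + G * 1 := by
      rw [abs_mul]
      exact add_le_add b1 (mul_le_mul b2 b3 (abs_nonneg _) hG0.le)
    _ = 2 * G := by ring

lemma normalized_cov {Ω : Type*} {m₁ m₂ : MeasurableSpace Ω} {mΩ : MeasurableSpace Ω}
    (hm₁ : m₁ ≤ mΩ) (hm₂ : m₂ ≤ mΩ)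
    (μ : Measure Ω) [IsProbabilityMeasure μ] (a : ℝ) (ha : 0 < a)
    (hα : ∀ A B : Set Ω, MeasurableSet[m₁] A → MeasurableSet[m₂] B →
      |(μ (A ∩ B)).toReal - (μ A).toReal * (μ B).toReal| ≤ a)
    (f g : Ω → ℝ) (hf : Measurable[m₁] f) (hg : Measurable[m₂] g)
    (q r : ℝ) (hq : 1 < q) (hr : 1 < r) (hqr : 1 / q + 1 / r < 1)
    (hfq : Integrable (fun ω => |f ω| ^ q) μ) (hgr : Integrable (fun ω => |g ω| ^ r) μ)
    (hf1 : ∫ ω, |f ω| ^ q ∂μ ≤ 1) (hg1 : ∫ ω, |g ω| ^ r ∂μ ≤ 1) :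
    |(∫ ω, f ω * g ω ∂μ) - (∫ ω, f ω ∂μ) * ∫ ω, g ω ∂μ| ≤ 8 * a ^ (1 - 1 / q - 1 / r) := by
  have hq0 : 0 < q := by linarith
  have hr0 : 0 < r := by linarith
  -- truncation facts
  have trunc : ∀ (m : MeasurableSpace Ω) (h : Ω → ℝ) (s : ℝ), m ≤ mΩ → 1 < s → Measurable[m] h →
      Integrable (fun ω => |h ω| ^ s) μ → (∫ ω, |h ω| ^ s ∂μ ≤ 1) →
      ∃ h1 h2 : Ω → ℝ, Measurable[m] h1 ∧ Measurable[m] h2 ∧ (∀ ω, h ω = h1 ω + h2 ω) ∧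
        (∀ ω, |h1 ω| ≤ a ^ (-(1 / s))) ∧ (∀ ω, h2 ω = 0 ∨ a ^ (-(1 / s)) ≤ |h2 ω|) ∧
        Integrable (fun ω => |h1 ω| ^ s) μ ∧ Integrable (fun ω => |h2 ω| ^ s) μ ∧
        (∫ ω, |h1 ω| ^ s ∂μ ≤ 1) ∧ (∫ ω, |h2 ω| ^ s ∂μ ≤ 1) := by
    intro m h s hm hs hh hhi hh1
    have hs0 : s ≠ 0 := by linarith
    set M := a ^ (-(1 / s)) with hM
    have hM0 : 0 < M := Real.rpow_pos_of_pos ha _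
    have hS : MeasurableSet[m] {ω | |h ω| ≤ M} :=
      (measurable_norm.comp hh) measurableSet_Iic
    set S := {ω | |h ω| ≤ M} with hSd
    have gen : ∀ T : Set Ω, MeasurableSet[mΩ] T →
        Integrable (fun ω => |T.indicator h ω| ^ s) μ ∧ ∫ ω, |T.indicator h ω| ^ s ∂μ ≤ 1 := by
      intro T hT
      have e : (fun ω => |T.indicator h ω| ^ s) = T.indicator (fun ω => |h ω| ^ s) := by
        ext ω
        by_cases hω : ω ∈ T <;> simp [hω, Real.zero_rpow hs0]
      have i := hhi.indicator hT
      rw [e]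
      refine ⟨i, le_trans (integral_mono i hhi ?_) hh1⟩
      exact Set.indicator_le_self' fun ω _ => by positivity
    refine ⟨S.indicator h, Sᶜ.indicator h, hh.indicator hS, hh.indicator hS.compl, ?_, ?_, ?_,
      (gen S (hm _ hS)).1, (gen Sᶜ (hm _ hS.compl)).1,
      (gen S (hm _ hS)).2, (gen Sᶜ (hm _ hS.compl)).2⟩
    · intro ω
      by_cases hω : ω ∈ S <;> simp [hω]
    · intro ω
      by_cases hω : ω ∈ S
      · have h3 : |h ω| ≤ M := hω
        rw [Set.indicator_of_mem hω]
        exact h3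
      · simpa [hω] using hM0.le
    · intro ω
      by_cases hω : ω ∈ S
      · left; simp [hω]
      · right
        have : M < |h ω| := not_le.mp hω
        simpa [hω] using this.le
  obtain ⟨f1, f2, mf1, mf2, fe, fb, ft, if1, if2, bf1, bf2⟩ := trunc m₁ f q hm₁ hq hf hfq hf1
  obtain ⟨g1, g2, mg1, mg2, ge, gb, gt, ig1, ig2, bg1, bg2⟩ := trunc m₂ g r hm₂ hr hg hgr hg1
  have hM0 : 0 < a ^ (-(1 / q)) := Real.rpow_pos_of_pos ha _
  have hN0 : 0 < a ^ (-(1 / r)) := Real.rpow_pos_of_pos ha _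
  have c1 := bounded_cov hm₁ hm₂ μ a hα f1 g1 mf1 mg1 _ _ hM0.le hN0.le fb gb
  have mf1' := mf1.mono hm₁ le_rfl
  have mf2' := mf2.mono hm₁ le_rfl
  have mg1' := mg1.mono hm₂ le_rfl
  have mg2' := mg2.mono hm₂ le_rfl
  obtain ⟨j2, c2⟩ := tail_cov μ f2 g mf2' (hg.mono hm₂ le_rfl) a q r ha hq hr hqr if2 hgr bf2 hg1 ft
  obtain ⟨j3, c3⟩ := tail_cov μ g2 f1 mg2' mf1' a r q ha hr hq (by linarith) ig2 if1 bg2 bf1 gt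
  have k_f1 := integrable_of_pow μ f1 mf1' q hq if1
  have k_f2 := integrable_of_pow μ f2 mf2' q hq if2
  have k_g1 := integrable_of_pow μ g1 mg1' r hr ig1
  have k_g2 := integrable_of_pow μ g2 mg2' r hr ig2
  have j1 : Integrable (fun ω => f1 ω * g1 ω) μ :=
    k_g1.bdd_mul mf1'.aestronglyMeasurable (c := a ^ (-(1 / q))) (by
      filter_upwards with ω; simpa using fb ω)
  have eF : ∫ ω, f ω ∂μ = (∫ ω, f1 ω ∂μ) + ∫ ω, f2 ω ∂μ := by
    rw [← integral_add k_f1 k_f2]; simp only [fe]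
  have eG : ∫ ω, g ω ∂μ = (∫ ω, g1 ω ∂μ) + ∫ ω, g2 ω ∂μ := by
    rw [← integral_add k_g1 k_g2]; simp only [ge]
  have eFG : ∫ ω, f ω * g ω ∂μ = (∫ ω, f1 ω * g1 ω ∂μ) + (∫ ω, g2 ω * f1 ω ∂μ)
      + ∫ ω, f2 ω * g ω ∂μ := by
    have j13 : Integrable (fun ω => f1 ω * g1 ω + g2 ω * f1 ω) μ := j1.add j3
    rw [← integral_add j1 j3, ← integral_add j13 j2]
    refine integral_congr_ae ?_
    filter_upwards with ω
    rw [fe, ge]; ring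
  have hpow : 4 * a * a ^ (-(1 / q)) * a ^ (-(1 / r)) = 4 * a ^ (1 - 1 / q - 1 / r) := by
    rw [show 1 - 1 / q - 1 / r = 1 + -(1 / q) + -(1 / r) by ring, Real.rpow_add ha,
      Real.rpow_add ha, Real.rpow_one]
    ring
  rw [hpow] at c1
  rw [show 1 - 1 / r - 1 / q = 1 - 1 / q - 1 / r by ring] at c3
  rw [eFG]
  rw [abs_le] at c1 c2 c3 ⊢
  have expand : (∫ ω, f ω ∂μ) * ∫ ω, g ω ∂μ = (∫ ω, f1 ω ∂μ) * (∫ ω, g1 ω ∂μ)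
      + (∫ ω, g2 ω ∂μ) * (∫ ω, f1 ω ∂μ) + (∫ ω, f2 ω ∂μ) * ∫ ω, g ω ∂μ := by
    rw [eF, eG]; ring
  rw [expand]
  constructor <;> linarith [c1.1, c1.2, c2.1, c2.2, c3.1, c3.2]

lemma scale_pow {Ω : Type*} {mΩ : MeasurableSpace Ω} (μ : Measure Ω) (f : Ω → ℝ) (q : ℝ)
    (hq : 1 < q) (hfq : Integrable (fun ω => |f ω| ^ q) μ) (hpos : 0 < ∫ ω, |f ω| ^ q ∂μ) :
    Integrable (fun ω => |((∫ ω, |f ω| ^ q ∂μ) ^ (1 / q))⁻¹ * f ω| ^ q) μ ∧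
    ∫ ω, |((∫ ω, |f ω| ^ q ∂μ) ^ (1 / q))⁻¹ * f ω| ^ q ∂μ ≤ 1 := by
  have hq0 : q ≠ 0 := by linarith
  set I := ∫ ω, |f ω| ^ q ∂μ with hI
  have e : ∀ ω, |(I ^ (1 / q))⁻¹ * f ω| ^ q = I⁻¹ * |f ω| ^ q := by
    intro ω
    have h0 : 0 < I ^ (1 / q) := Real.rpow_pos_of_pos hpos _
    rw [abs_mul, abs_of_pos (inv_pos.mpr h0), Real.mul_rpow (inv_pos.mpr h0).le (abs_nonneg _),
      Real.inv_rpow h0.le, ← Real.rpow_mul hpos.le, one_div_mul_cancel hq0, Real.rpow_one]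
  simp only [e]
  refine ⟨hfq.const_mul _, ?_⟩
  rw [integral_const_mul, ← hI, inv_mul_cancel₀ hpos.ne']

lemma zero_of_pow {Ω : Type*} {mΩ : MeasurableSpace Ω} (μ : Measure Ω) (f : Ω → ℝ) (q : ℝ)
    (hq : 1 < q) (hfq : Integrable (fun ω => |f ω| ^ q) μ) (hz : ∫ ω, |f ω| ^ q ∂μ = 0) :
    ∀ᵐ ω ∂μ, f ω = 0 := by
  rw [integral_eq_zero_iff_of_nonneg (fun ω => by positivity) hfq] at hz
  filter_upwards [hz] with ω hω
  have hω' : |f ω| ^ q = 0 := hω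
  rw [Real.rpow_eq_zero (abs_nonneg _) (by linarith)] at hω'
  exact abs_eq_zero.mp hω'

lemma positive_cov {Ω : Type*} {m₁ m₂ : MeasurableSpace Ω} {mΩ : MeasurableSpace Ω}
    (hm₁ : m₁ ≤ mΩ) (hm₂ : m₂ ≤ mΩ)
    (μ : Measure Ω) [IsProbabilityMeasure μ] (a : ℝ) (ha : 0 < a)
    (hα : ∀ A B : Set Ω, MeasurableSet[m₁] A → MeasurableSet[m₂] B →
      |(μ (A ∩ B)).toReal - (μ A).toReal * (μ B).toReal| ≤ a)
    (f g : Ω → ℝ) (hf : Measurable[m₁] f) (hg : Measurable[m₂] g)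
    (q r : ℝ) (hq : 1 < q) (hr : 1 < r) (hqr : 1 / q + 1 / r < 1)
    (hfq : Integrable (fun ω => |f ω| ^ q) μ) (hgr : Integrable (fun ω => |g ω| ^ r) μ) :
    |(∫ ω, f ω * g ω ∂μ) - (∫ ω, f ω ∂μ) * ∫ ω, g ω ∂μ| ≤
      12 * (∫ ω, |f ω| ^ q ∂μ) ^ (1 / q) * (∫ ω, |g ω| ^ r ∂μ) ^ (1 / r) *
        a ^ (1 - 1 / q - 1 / r) := by
  have nf : 0 ≤ ∫ ω, |f ω| ^ q ∂μ := integral_nonneg fun ω => by positivity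
  have ng : 0 ≤ ∫ ω, |g ω| ^ r ∂μ := integral_nonneg fun ω => by positivity
  rcases nf.eq_or_lt with zf | pf
  · have h0 := zero_of_pow μ f q hq hfq zf.symm
    have e1 : ∫ ω, f ω * g ω ∂μ = 0 := integral_eq_zero_of_ae (by
      filter_upwards [h0] with ω hω; simp [hω])
    have e2 : ∫ ω, f ω ∂μ = 0 := integral_eq_zero_of_ae h0
    rw [e1, e2, zero_mul, sub_zero, abs_zero]
    positivity
  rcases ng.eq_or_lt with zg | pg
  · have h0 := zero_of_pow μ g r hr hgr zg.symm
    have e1 : ∫ ω, f ω * g ω ∂μ = 0 := integral_eq_zero_of_ae (by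
      filter_upwards [h0] with ω hω; simp [hω])
    have e2 : ∫ ω, g ω ∂μ = 0 := integral_eq_zero_of_ae h0
    rw [e1, e2, mul_zero, sub_zero, abs_zero]
    positivity
  obtain ⟨i1, b1⟩ := scale_pow μ f q hq hfq pf
  obtain ⟨i2, b2⟩ := scale_pow μ g r hr hgr pg
  set X := (∫ ω, |f ω| ^ q ∂μ) ^ (1 / q) with hX
  set Y := (∫ ω, |g ω| ^ r ∂μ) ^ (1 / r) with hY
  have hX0 : 0 < X := Real.rpow_pos_of_pos pf _
  have hY0 : 0 < Y := Real.rpow_pos_of_pos pg _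
  have main := normalized_cov hm₁ hm₂ μ a ha hα (fun ω => X⁻¹ * f ω) (fun ω => Y⁻¹ * g ω)
    (hf.const_mul _) (hg.const_mul _) q r hq hr hqr i1 i2 b1 b2
  have e : (∫ ω, X⁻¹ * f ω * (Y⁻¹ * g ω) ∂μ) - (∫ ω, X⁻¹ * f ω ∂μ) * ∫ ω, Y⁻¹ * g ω ∂μ
      = (X * Y)⁻¹ * ((∫ ω, f ω * g ω ∂μ) - (∫ ω, f ω ∂μ) * ∫ ω, g ω ∂μ) := by
    have : ∀ ω, X⁻¹ * f ω * (Y⁻¹ * g ω) = (X * Y)⁻¹ * (f ω * g ω) := by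
      intro ω; rw [mul_inv]; ring
    simp only [this, integral_const_mul]
    rw [mul_inv]; ring
  rw [e, abs_mul, abs_of_pos (by positivity), inv_mul_le_iff₀ (by positivity)] at main
  have hG0 : 0 < a ^ (1 - 1 / q - 1 / r) := Real.rpow_pos_of_pos ha _
  refine main.trans ?_
  have : 0 < X * Y * a ^ (1 - 1 / q - 1 / r) := by positivity
  nlinarith

/-- Davydov's covariance inequality for an α-mixing process. -/
theorem stmt9 {Ω : Type*} [mΩ : MeasurableSpace Ω] (μ : Measure Ω) [IsProbabilityMeasure μ]
    (ξt : ℤ → Ω → ℝ) (hξt : ∀ s, Measurable (ξt s))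
    (k : ℤ) (hk : 1 ≤ k) (αk : ℝ)
    (mpast mfut : MeasurableSpace Ω)
    (hmpast : mpast = ⨆ (s : ℤ) (_ : s ≤ 0), MeasurableSpace.comap (ξt s) inferInstance)
    (hmfut : mfut = ⨆ (s : ℤ) (_ : k ≤ s), MeasurableSpace.comap (ξt s) inferInstance)
    (hα : ∀ A B : Set Ω, MeasurableSet[mpast] A → MeasurableSet[mfut] B →
      |(μ (A ∩ B)).toReal - (μ A).toReal * (μ B).toReal| ≤ αk)
    (ξ η : Ω → ℝ) (hξ : Measurable[mpast] ξ) (hη : Measurable[mfut] η)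
    (q r : ℝ) (hq : 1 < q) (hr : 1 < r) (hqr : 1 / q + 1 / r < 1)
    (hξq : Integrable (fun ω => |ξ ω| ^ q) μ)
    (hηr : Integrable (fun ω => |η ω| ^ r) μ) :
    |(∫ ω, ξ ω * η ω ∂μ) - (∫ ω, ξ ω ∂μ) * ∫ ω, η ω ∂μ| ≤
      12 * (∫ ω, |ξ ω| ^ q ∂μ) ^ (1 / q) * (∫ ω, |η ω| ^ r ∂μ) ^ (1 / r) *
        αk ^ (1 - 1 / q - 1 / r) := by
  have hm₁ : mpast ≤ mΩ := by
    rw [hmpast]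
    exact iSup₂_le fun s _ => (hξt s).comap_le
  have hm₂ : mfut ≤ mΩ := by
    rw [hmfut]
    exact iSup₂_le fun s _ => (hξt s).comap_le
  have hα0 : 0 ≤ αk := (abs_nonneg _).trans (hα ∅ ∅ (@MeasurableSet.empty _ mpast) (@MeasurableSet.empty _ mfut))
  have hγ : 0 ≤ 1 - 1 / q - 1 / r := by linarith
  have hcont : Continuous fun x : ℝ =>
      12 * (∫ ω, |ξ ω| ^ q ∂μ) ^ (1 / q) * (∫ ω, |η ω| ^ r ∂μ) ^ (1 / r) *
        x ^ (1 - 1 / q - 1 / r) :=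
    continuous_const.mul (Real.continuous_rpow_const hγ)
  refine ge_of_tendsto (hcont.continuousWithinAt (s := Set.Ioi αk) (x := αk)) ?_
  filter_upwards [self_mem_nhdsWithin] with x hx
  have hx' : αk < x := hx
  exact positive_cov hm₁ hm₂ μ x (hα0.trans_lt hx')
    (fun A B hA hB => (hα A B hA hB).trans hx'.le) ξ η hξ hη q r hq hr hqr hξq hηr
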